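/- Uniform positivity of the diagonal kernel in the bulk: fix θ with −√2 < θ < √2 and R > 0, and for x ∈ ℝ and N ≥ 1 write x_θ^N = x/N + θ. Then sup_{N ≥ 1} sup_{|x| < R} 1 / L^N(x_θ^N, x_θ^N) < ∞; in particular L^N(x_θ^N, x_θ^N) > 0 for all N ≥ 1 and |x| < R. -/

import Mathlib

open Real MeasureTheory Filter Set

/-- Physicists' Hermite polynomial `H_n(x) = (-1)^n e^{x^2} (d/dx)^n e^{-x^2}`. -/
noncomputable def hermiteP (n : ℕ) (x : ℝ) : ℝ :=
  (-1 : ℝ) ^ n * Real.exp (x ^ 2) * iteratedDeriv n (fun t => Real.exp (-t ^ 2)) x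

/-- Oscillator wave function `ψ_n(x) = (√π 2^n n!)^{-1/2} e^{-x^2/2} H_n(x)`. -/
noncomputable def osc (n : ℕ) (x : ℝ) : ℝ :=
  (Real.sqrt (Real.sqrt Real.pi * 2 ^ n * (n.factorial : ℝ)))⁻¹ *
    Real.exp (-x ^ 2 / 2) * hermiteP n x

/-- The kernel `K^N(x,y) = Σ_{k=0}^{N-1} ψ_k(x) ψ_k(y)`. -/
noncomputable def kerK (N : ℕ) (x y : ℝ) : ℝ :=
  ∑ k ∈ Finset.range N, osc k x * osc k y

/-- The rescaled kernel `L^N(x,y) = N^{-1/2} K^N(√N x, √N y)`. -/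
noncomputable def kerL (N : ℕ) (x y : ℝ) : ℝ :=
  (Real.sqrt (N : ℝ))⁻¹ * kerK N (Real.sqrt (N : ℝ) * x) (Real.sqrt (N : ℝ) * y)

lemma gaussIter_hasDeriv (n : ℕ) (x : ℝ) :
    HasDerivAt (iteratedDeriv n (fun t : ℝ => Real.exp (-t ^ 2)))
      (iteratedDeriv (n + 1) (fun t : ℝ => Real.exp (-t ^ 2)) x) x := by
  have hc : ContDiff ℝ (n + 1 : ℕ) (fun t : ℝ => Real.exp (-t ^ 2)) := by fun_prop
  have hd : Differentiable ℝ (iteratedDeriv n (fun t : ℝ => Real.exp (-t ^ 2))) :=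
    hc.differentiable_iteratedDeriv n (by exact_mod_cast Nat.lt_succ_self n)
  rw [iteratedDeriv_succ]
  exact (hd x).hasDerivAt

lemma gaussIter_one (x : ℝ) : iteratedDeriv 1 (fun t : ℝ => Real.exp (-t ^ 2)) x
    = -2 * x * iteratedDeriv 0 (fun t : ℝ => Real.exp (-t ^ 2)) x := by
  have h1 := gaussIter_hasDeriv 0 x
  have h2 : HasDerivAt (fun t : ℝ => Real.exp (-t ^ 2)) (Real.exp (-x ^ 2) * (-(2 * x))) x := by
    have := ((hasDerivAt_pow 2 x).neg).exp
    simpa using this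
  rw [iteratedDeriv_zero] at h1
  have := h1.unique h2
  rw [iteratedDeriv_zero, this]
  ring

lemma gaussIter_rec (n : ℕ) : ∀ x : ℝ, iteratedDeriv (n + 2) (fun t : ℝ => Real.exp (-t ^ 2)) x
    = -2 * x * iteratedDeriv (n + 1) (fun t : ℝ => Real.exp (-t ^ 2)) x
      - 2 * (n + 1) * iteratedDeriv n (fun t : ℝ => Real.exp (-t ^ 2)) x := by
  induction n with
  | zero =>
    intro x
    have h1 := gaussIter_hasDeriv 1 x
    have h2 := ((hasDerivAt_id x).const_mul (-2 : ℝ)).mul (gaussIter_hasDeriv 0 x)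
    have he : iteratedDeriv 1 (fun t : ℝ => Real.exp (-t ^ 2)) =
      (fun y => -2 * id y) * iteratedDeriv 0 (fun t : ℝ => Real.exp (-t ^ 2)) := by
      funext y
      simpa using gaussIter_one y
    rw [he] at h1
    have := h1.unique h2
    simp only [id, Nat.reduceAdd, zero_add] at this ⊢
    rw [this]
    push_cast
    ring
  | succ n ih =>
    intro x
    have h1 := gaussIter_hasDeriv (n + 2) x
    have h2 := (((hasDerivAt_id x).const_mul (-2 : ℝ)).mul (gaussIter_hasDeriv (n + 1) x)).sub
      ((gaussIter_hasDeriv n x).const_mul (2 * ((n : ℝ) + 1)))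
    have he : iteratedDeriv (n + 2) (fun t : ℝ => Real.exp (-t ^ 2)) =
      (fun y => -2 * id y) * iteratedDeriv (n + 1) (fun t : ℝ => Real.exp (-t ^ 2))
       - (fun y => (2 * ((n : ℝ) + 1)) * iteratedDeriv n (fun t : ℝ => Real.exp (-t ^ 2)) y) := by
      funext y
      simpa using ih y
    rw [he] at h1
    have := h1.unique h2
    simp only [id] at this
    rw [show n + 1 + 2 = n + 2 + 1 by ring, this]
    push_cast
    ring

lemma hermiteP_rec (n : ℕ) (x : ℝ) :
    hermiteP (n + 2) x = 2 * x * hermiteP (n + 1) x - 2 * (n + 1) * hermiteP n x := by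
  unfold hermiteP
  rw [gaussIter_rec]
  ring

lemma hermiteP_hasDeriv (n : ℕ) (x : ℝ) :
    HasDerivAt (hermiteP n) (2 * x * hermiteP n x - hermiteP (n + 1) x) x := by
  have h0 : HasDerivAt (fun t : ℝ => Real.exp (t ^ 2)) (Real.exp (x ^ 2) * (2 * x)) x := by
    have := (hasDerivAt_pow 2 x).exp
    simpa using this
  have h := (h0.const_mul ((-1 : ℝ) ^ n)).mul (gaussIter_hasDeriv n x)
  refine h.congr_deriv ?_
  unfold hermiteP
  ring

/-- Normalisation constant. -/
noncomputable def oscC (n : ℕ) : ℝ :=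
  (Real.sqrt (Real.sqrt Real.pi * 2 ^ n * (n.factorial : ℝ)))⁻¹

lemma oscC_succ (n : ℕ) : oscC n = Real.sqrt (2 * (n + 1)) * oscC (n + 1) := by
  unfold oscC
  have h : Real.sqrt Real.pi * 2 ^ (n + 1) * ((n + 1).factorial : ℝ)
      = (2 * (n + 1)) * (Real.sqrt Real.pi * 2 ^ n * (n.factorial : ℝ)) := by
    rw [Nat.factorial_succ]; push_cast; ring
  have h2 : (0 : ℝ) < Real.sqrt (2 * (n + 1)) := by positivity
  rw [h, Real.sqrt_mul (by positivity : (0 : ℝ) ≤ 2 * (n + 1)) (Real.sqrt Real.pi * 2 ^ n * (n.factorial : ℝ)), mul_inv, ← mul_assoc,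
    mul_inv_cancel₀ h2.ne', one_mul]

lemma osc_eq (n : ℕ) (x : ℝ) : osc n x = oscC n * Real.exp (-x ^ 2 / 2) * hermiteP n x := rfl

lemma osc_hasDeriv (n : ℕ) (x : ℝ) :
    HasDerivAt (osc n) (x * osc n x - Real.sqrt (2 * (n + 1)) * osc (n + 1) x) x := by
  have h0 : HasDerivAt (fun t : ℝ => Real.exp (-t ^ 2 / 2)) (Real.exp (-x ^ 2 / 2) * (-x)) x := by
    have := (((hasDerivAt_pow 2 x).neg).div_const 2).exp
    refine this.congr_deriv ?_
    simp
    ring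
  have h := (h0.const_mul (oscC n)).mul (hermiteP_hasDeriv n x)
  refine h.congr_deriv ?_
  rw [osc_eq, osc_eq, oscC_succ]
  ring

lemma osc_rec (n : ℕ) (x : ℝ) :
    Real.sqrt (2 * (n + 2)) * osc (n + 2) x =
      2 * x * osc (n + 1) x - Real.sqrt (2 * (n + 1)) * osc n x := by
  have h1 := oscC_succ n
  have h2 := oscC_succ (n + 1)
  have hs : Real.sqrt (2 * (n + 1)) * Real.sqrt (2 * (n + 1)) = 2 * ((n : ℝ) + 1) :=
    Real.mul_self_sqrt (by positivity)
  push_cast at h2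
  rw [show (n : ℝ) + 1 + 1 = n + 2 by ring] at h2
  rw [osc_eq, osc_eq, osc_eq, hermiteP_rec]
  rw [h1]
  have h3 : Real.sqrt (2 * (n + 2)) * oscC (n + 2) = oscC (n + 1) := h2.symm
  linear_combination (Real.exp (-x ^ 2 / 2) * (2 * x * hermiteP (n + 1) x - 2 * (n + 1) * hermiteP n x)) * h3 + oscC (n + 1) * Real.exp (-x ^ 2 / 2) * hermiteP n x * hs

lemma osc_succ_hasDeriv (n : ℕ) (x : ℝ) :
    HasDerivAt (osc (n + 1)) (Real.sqrt (2 * (n + 1)) * osc n x - x * osc (n + 1) x) x := by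
  refine (osc_hasDeriv (n + 1) x).congr_deriv ?_
  have := osc_rec n x
  push_cast
  rw [show (n : ℝ) + 1 + 1 = n + 2 by ring]
  linarith

/-- Sonin function. -/
noncomputable def sonin (n : ℕ) (x : ℝ) : ℝ :=
  osc (n + 1) x ^ 2 + (Real.sqrt (2 * (n + 1)) * osc n x - x * osc (n + 1) x) ^ 2
    / (2 * n + 3 - x ^ 2)

lemma sonin_hasDeriv (n : ℕ) (x : ℝ) (hx : 0 < 2 * n + 3 - x ^ 2) :
    HasDerivAt (sonin n) (2 * x * (Real.sqrt (2 * (n + 1)) * osc n x - x * osc (n + 1) x) ^ 2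
      / (2 * n + 3 - x ^ 2) ^ 2) x := by
  have ha := osc_succ_hasDeriv n x
  have hb := osc_hasDeriv n x
  have hv := (hb.const_mul (Real.sqrt (2 * (n + 1)))).sub ((hasDerivAt_id x).mul ha)
  have hq := (hasDerivAt_pow 2 x).const_sub (2 * (n : ℝ) + 3)
  have h := (ha.pow 2).add ((hv.pow 2).div hq hx.ne')
  refine h.congr_deriv ?_
  have hs : Real.sqrt (2 * (n + 1)) ^ 2 = 2 * ((n : ℝ) + 1) :=
    Real.sq_sqrt (by positivity)
  simp only [id, Pi.sub_apply, Pi.mul_apply, Pi.pow_apply]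
  generalize Real.sqrt (2 * (n + 1)) = s at *
  have hne := hx.ne'
  field_simp
  push_cast
  have : (n : ℝ) = s ^ 2 / 2 - 1 := by linarith
  rw [this]
  ring

lemma sonin_ge (n : ℕ) (x : ℝ) (hx : 0 < 2 * n + 3 - x ^ 2) : sonin n 0 ≤ sonin n x := by
  have key : ∀ y, |y| ≤ |x| → 0 < 2 * n + 3 - y ^ 2 := by
    intro y hy
    have := sq_le_sq.2 hy
    linarith
  rcases le_total 0 x with h | h
  · have hm : MonotoneOn (sonin n) (Icc 0 x) := by
      have hk : ∀ y ∈ Icc 0 x, 0 < 2 * n + 3 - y ^ 2 := by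
        intro y hy
        apply key
        rw [abs_of_nonneg hy.1, abs_of_nonneg h]; exact hy.2
      apply monotoneOn_of_deriv_nonneg (convex_Icc _ _)
      · intro y hy
        exact (sonin_hasDeriv n y (hk y hy)).continuousAt.continuousWithinAt
      · intro y hy
        exact (sonin_hasDeriv n y (hk y (interior_subset hy))).differentiableAt.differentiableWithinAt
      · intro y hy
        have hy' := interior_subset hy
        rw [(sonin_hasDeriv n y (hk y hy')).deriv]
        have := hy'.1
        positivity
    exact hm (left_mem_Icc.2 h) (right_mem_Icc.2 h) h
  · have hm : AntitoneOn (sonin n) (Icc x 0) := by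
      have hk : ∀ y ∈ Icc x 0, 0 < 2 * n + 3 - y ^ 2 := by
        intro y hy
        apply key
        rw [abs_of_nonpos hy.2, abs_of_nonpos h]; linarith [hy.1]
      apply antitoneOn_of_deriv_nonpos (convex_Icc _ _)
      · intro y hy
        exact (sonin_hasDeriv n y (hk y hy)).continuousAt.continuousWithinAt
      · intro y hy
        exact (sonin_hasDeriv n y (hk y (interior_subset hy))).differentiableAt.differentiableWithinAt
      · intro y hy
        have hy' := interior_subset hy
        rw [(sonin_hasDeriv n y (hk y hy')).deriv]
        have := hy'.2
        apply div_nonpos_of_nonpos_of_nonneg _ (by positivity)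
        apply mul_nonpos_of_nonpos_of_nonneg (by linarith) (by positivity)
    exact hm (left_mem_Icc.2 h) (right_mem_Icc.2 h) h

lemma osc_zero_sq (x : ℝ) : osc 0 x ^ 2 = (Real.sqrt Real.pi)⁻¹ * Real.exp (-x ^ 2) := by
  unfold osc hermiteP
  have h1 : Real.sqrt (Real.sqrt Real.pi) ^ 2 = Real.sqrt Real.pi := Real.sq_sqrt (by positivity)
  simp only [pow_zero, Nat.factorial_zero, Nat.cast_one, mul_one, one_mul, iteratedDeriv_zero]
  rw [← Real.exp_add, mul_pow, mul_pow, inv_pow, h1, ← Real.exp_nat_mul]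
  simp
  left
  ring

/-- Lower bound constant at the origin. -/
lemma osc_even_zero (m : ℕ) : (Real.sqrt Real.pi)⁻¹ ^ 2 ≤ (4 * m + 1) * (osc (2 * m) 0 ^ 2) ^ 2 := by
  induction m with
  | zero =>
    rw [mul_zero, osc_zero_sq]
    simp
  | succ m ih =>
    have h := osc_rec (2 * m) 0
    have e1 : Real.sqrt (2 * (((2 * m : ℕ) : ℝ) + 2)) ^ 2 = 2 * (((2 * m : ℕ) : ℝ) + 2) := Real.sq_sqrt (by positivity)
    have e2 : Real.sqrt (2 * (((2 * m : ℕ) : ℝ) + 1)) ^ 2 = 2 * (((2 * m : ℕ) : ℝ) + 1) := Real.sq_sqrt (by positivity)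
    have h2 := congrArg (· ^ 2) h
    simp only [mul_zero, zero_mul, zero_sub, neg_sq, mul_pow, e1, e2] at h2
    rw [show 2 * (m + 1) = 2 * m + 2 by ring]
    push_cast at h2 ⊢
    generalize osc (2 * m) 0 ^ 2 = a at *
    have hm : (0 : ℝ) ≤ m := by positivity
    have h3 : osc (2 * m + 2) 0 ^ 2 = (2 * m + 1) / (2 * m + 2) * a := by
      field_simp
      linarith
    rw [h3]
    refine ih.trans ?_
    rw [mul_pow, ← mul_assoc]
    apply mul_le_mul_of_nonneg_right _ (sq_nonneg a)
    rw [div_pow, ← mul_div_assoc, le_div_iff₀ (by positivity)]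
    nlinarith

lemma osc_even_zero' (m : ℕ) : (Real.sqrt Real.pi)⁻¹ / Real.sqrt (4 * m + 1) ≤ osc (2 * m) 0 ^ 2 := by
  rw [div_le_iff₀ (by positivity)]
  apply le_of_sq_le_sq _ (by positivity)
  rw [mul_pow, Real.sq_sqrt (by positivity)]
  linarith [osc_even_zero m]

lemma sonin_zero (n : ℕ) : (2 / 3) * ((Real.sqrt Real.pi)⁻¹ / Real.sqrt (2 * n + 3)) ≤ sonin n 0 := by
  have hs : Real.sqrt (2 * (n + 1)) ^ 2 = 2 * ((n : ℝ) + 1) :=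
    Real.sq_sqrt (by positivity)
  have e : sonin n 0 = osc (n + 1) 0 ^ 2 + (2 * (n + 1)) / (2 * n + 3) * osc n 0 ^ 2 := by
    unfold sonin
    simp only [zero_mul, sub_zero, mul_pow, hs]
    simp
    ring
  have hc : (2 / 3 : ℝ) ≤ (2 * (n + 1)) / (2 * n + 3) := by
    rw [div_le_div_iff₀ (by norm_num) (by positivity)]
    have : (0 : ℝ) ≤ n := by positivity
    linarith
  rw [e]
  rcases Nat.even_or_odd' n with ⟨m, h | h⟩
  · have h1 := osc_even_zero' m
    rw [← h] at h1
    have h2 : (Real.sqrt Real.pi)⁻¹ / Real.sqrt (2 * n + 3) ≤ (Real.sqrt Real.pi)⁻¹ / Real.sqrt (4 * m + 1) := by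
      apply div_le_div_of_nonneg_left (by positivity) (by positivity)
      apply Real.sqrt_le_sqrt
      rw [h]; push_cast; linarith
    have h3 := mul_le_mul hc (h2.trans h1) (by positivity) (by positivity)
    linarith [sq_nonneg (osc (n + 1) 0)]
  · have h1 := osc_even_zero' (m + 1)
    rw [show 2 * (m + 1) = n + 1 by omega] at h1
    have h2 : (Real.sqrt Real.pi)⁻¹ / Real.sqrt (2 * n + 3) ≤ (Real.sqrt Real.pi)⁻¹ / Real.sqrt (4 * (m + 1 : ℕ) + 1) := by
      apply div_le_div_of_nonneg_left (by positivity) (by positivity)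
      apply Real.sqrt_le_sqrt
      rw [h]; push_cast; linarith
    have h3 : 0 ≤ (2 * (n + 1)) / (2 * n + 3) * osc n 0 ^ 2 := by positivity
    have h4 : 0 ≤ (Real.sqrt Real.pi)⁻¹ / Real.sqrt (2 * n + 3) := by positivity
    linarith

lemma sonin_le (n N : ℕ) (δ y : ℝ) (hδ : 0 < δ) (hn : n + 1 < N) (hy : y ^ 2 ≤ 2 * N)
    (hq : δ * N ≤ 2 * n + 3 - y ^ 2) :
    sonin n y ≤ (1 + 4 / δ) * (osc (n + 1) y ^ 2 + osc n y ^ 2) := by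
  have hN : (0 : ℝ) < N := by exact_mod_cast (by omega : 0 < N)
  have hnN : (n : ℝ) + 1 ≤ N := by exact_mod_cast hn.le
  have hs : Real.sqrt (2 * (n + 1)) ^ 2 = 2 * ((n : ℝ) + 1) :=
    Real.sq_sqrt (by positivity)
  have hδN : 0 < δ * N := by positivity
  unfold sonin
  generalize Real.sqrt (2 * (n + 1)) = s at *
  generalize osc (n + 1) y = a at *
  generalize osc n y = b at *
  have h1 : (s * b - y * a) ^ 2 ≤ 4 * N * (a ^ 2 + b ^ 2) := by
    have i1 : (s * b - y * a) ^ 2 ≤ 2 * (s ^ 2 * b ^ 2) + 2 * (y ^ 2 * a ^ 2) := by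
      nlinarith [sq_nonneg (s * b + y * a)]
    have i2 : s ^ 2 * b ^ 2 ≤ 2 * N * b ^ 2 :=
      mul_le_mul_of_nonneg_right (by linarith) (sq_nonneg b)
    have i3 : y ^ 2 * a ^ 2 ≤ 2 * N * a ^ 2 :=
      mul_le_mul_of_nonneg_right hy (sq_nonneg a)
    linarith
  have h2 : (s * b - y * a) ^ 2 / (2 * n + 3 - y ^ 2) ≤ 4 * N * (a ^ 2 + b ^ 2) / (δ * N) :=
    div_le_div₀ (by positivity) h1 hδN hq
  have h3 : 4 * N * (a ^ 2 + b ^ 2) / (δ * N) = 4 / δ * (a ^ 2 + b ^ 2) := by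
    field_simp
  rw [h3] at h2
  nlinarith [sq_nonneg b]

lemma kerK_ge (N : ℕ) (δ y : ℝ) (hδ : 0 < δ) (hN : 4 / δ ≤ N) (hδ1 : δ ≤ 1)
    (hy : y ^ 2 ≤ (2 - 3 * δ) * N) :
    δ * (Real.sqrt Real.pi)⁻¹ / (12 * (1 + 4 / δ)) * Real.sqrt N ≤ kerK N y y := by
  have hN4 : (4 : ℝ) ≤ N := by
    refine le_trans ?_ hN
    rw [le_div_iff₀ hδ]; linarith
  have hN0 : (0 : ℝ) < N := by linarith
  have hNn : 4 ≤ N := by exact_mod_cast hN4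
  have hδN : 4 ≤ δ * N := by
    rw [div_le_iff₀ hδ] at hN; linarith
  set M := ⌈(1 - δ) * N⌉₊ with hM
  have hM1 : (M : ℝ) < (1 - δ) * N + 1 := Nat.ceil_lt_add_one (by
    apply mul_nonneg <;> linarith)
  have hM2 : (1 - δ) * N ≤ M := Nat.le_ceil _
  have hMN : M ≤ N - 1 := by
    have : (M : ℝ) + 1 ≤ N := by nlinarith
    have : M + 1 ≤ N := by exact_mod_cast this
    omega
  -- lower bound per term
  have hterm : ∀ n ∈ Finset.Ico M (N - 1),
      (2 / 3) * ((Real.sqrt Real.pi)⁻¹ / (2 * Real.sqrt N)) ≤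
        (1 + 4 / δ) * (osc (n + 1) y ^ 2 + osc n y ^ 2) := by
    intro n hn
    rw [Finset.mem_Ico] at hn
    have hnM : (M : ℝ) ≤ n := by exact_mod_cast hn.1
    have hnN : n + 1 < N := by omega
    have hnN' : (n : ℝ) + 2 ≤ N := by exact_mod_cast hnN
    have hq : δ * N ≤ 2 * n + 3 - y ^ 2 := by nlinarith
    have h1 := sonin_le n N δ y hδ hnN (by nlinarith) hq
    have h2 := sonin_ge n y (by linarith)
    have h3 := sonin_zero n
    have h4 : (Real.sqrt Real.pi)⁻¹ / (2 * Real.sqrt N) ≤ (Real.sqrt Real.pi)⁻¹ / Real.sqrt (2 * n + 3) := by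
      apply div_le_div_of_nonneg_left (by positivity) (by positivity)
      rw [Real.sqrt_le_left (by positivity), mul_pow, Real.sq_sqrt hN0.le]
      linarith
    linarith
  have hsum := Finset.sum_le_sum hterm
  rw [Finset.sum_const, ← Finset.mul_sum, Finset.sum_add_distrib, Nat.card_Ico, nsmul_eq_mul] at hsum
  have hk1 : ∑ n ∈ Finset.Ico M (N - 1), osc n y ^ 2 ≤ kerK N y y := by
    unfold kerK
    simp only [← sq]
    apply Finset.sum_le_sum_of_subset_of_nonneg
    · intro n hn
      rw [Finset.mem_Ico] at hn
      rw [Finset.mem_range]; omega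
    · intros; positivity
  have hk2 : ∑ n ∈ Finset.Ico M (N - 1), osc (n + 1) y ^ 2 ≤ kerK N y y := by
    unfold kerK
    simp only [← sq]
    rw [Finset.sum_Ico_add' (fun n => osc n y ^ 2) M (N - 1) 1]
    apply Finset.sum_le_sum_of_subset_of_nonneg
    · intro n hn
      rw [Finset.mem_Ico] at hn
      rw [Finset.mem_range]; omega
    · intros; positivity
  have hcard : δ * N / 2 ≤ ((N - 1 - M : ℕ) : ℝ) := by
    rw [Nat.cast_sub hMN, Nat.cast_sub (by omega)]
    push_cast
    linarith
  have hD : 0 < 1 + 4 / δ := by positivity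
  have hsq : 0 < Real.sqrt N := by positivity
  have hNs : Real.sqrt N * Real.sqrt N = N := Real.mul_self_sqrt hN0.le
  have h5 : δ * N / 2 * ((2 / 3) * ((Real.sqrt Real.pi)⁻¹ / (2 * Real.sqrt N))) ≤ (1 + 4 / δ) * (2 * kerK N y y) := by
    refine (mul_le_mul_of_nonneg_right hcard (by positivity)).trans (hsum.trans ?_)
    apply mul_le_mul_of_nonneg_left _ hD.le
    linarith
  have h6 : δ * N / 2 * ((2 / 3) * ((Real.sqrt Real.pi)⁻¹ / (2 * Real.sqrt N))) = δ * (Real.sqrt Real.pi)⁻¹ / 6 * Real.sqrt N := by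
    rw [← hNs]
    field_simp
    norm_num
    ring
  rw [h6] at h5
  generalize 1 + 4 / δ = D at *
  generalize (Real.sqrt Real.pi)⁻¹ = p at *
  rw [div_mul_eq_mul_div, div_le_iff₀ (by positivity)]
  linarith

lemma kerK_ge_zero (N : ℕ) (hN : 1 ≤ N) (y : ℝ) :
    (Real.sqrt Real.pi)⁻¹ * Real.exp (-y ^ 2) ≤ kerK N y y := by
  rw [← osc_zero_sq]
  unfold kerK
  simp only [← sq]
  exact Finset.single_le_sum (f := fun n => osc n y ^ 2) (fun _ _ => sq_nonneg _)
    (Finset.mem_range.2 (by omega))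

lemma kerL_lower (θ R : ℝ) (hθ : θ ^ 2 < 2) (hR : 0 < R) :
    ∃ c : ℝ, 0 < c ∧ ∀ N : ℕ, 1 ≤ N → ∀ x : ℝ, |x| < R →
      c ≤ kerL N (x / (N : ℝ) + θ) (x / (N : ℝ) + θ) := by
  obtain ⟨δ, hδ⟩ : ∃ δ : ℝ, δ = (2 - θ ^ 2) / 4 := ⟨_, rfl⟩
  have hδ0 : 0 < δ := by rw [hδ]; linarith
  have hδ1 : δ ≤ 1 := by rw [hδ]; nlinarith [sq_nonneg θ]
  have hθ2 : |θ| ≤ 2 := by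
    apply abs_le_of_sq_le_sq _ (by norm_num)
    linarith
  obtain ⟨N0, hN0⟩ : ∃ N0 : ℕ, 4 / δ + (4 * R + R ^ 2) / δ ≤ N0 := exists_nat_ge _
  have hN0' : (0 : ℝ) < N0 := lt_of_lt_of_le (by positivity) hN0
  set c1 := δ * (Real.sqrt Real.pi)⁻¹ / (12 * (1 + 4 / δ)) with hc1
  set c2 := (Real.sqrt N0)⁻¹ * ((Real.sqrt Real.pi)⁻¹ * Real.exp (-(N0 * (2 + R) ^ 2))) with hc2
  have hc1p : 0 < c1 := by positivity
  have hc2p : 0 < c2 := by positivity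
  refine ⟨min c1 c2, lt_min hc1p hc2p, ?_⟩
  intro N hN x hx
  have hN1 : (1 : ℝ) ≤ N := by exact_mod_cast hN
  have hNp : (0 : ℝ) < N := by linarith
  have hsN : 0 < Real.sqrt N := by positivity
  have hsq : (Real.sqrt N * (x / N + θ)) ^ 2 = N * (x / N + θ) ^ 2 := by
    rw [mul_pow, Real.sq_sqrt hNp.le]
  unfold kerL
  rcases le_total N0 N with h | h
  · refine (min_le_left _ _).trans ?_
    have hNN : (N0 : ℝ) ≤ N := by exact_mod_cast h
    have a1 : 0 ≤ 4 / δ := by positivity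
    have a2 : 0 ≤ (4 * R + R ^ 2) / δ := by positivity
    have a3 : (4 * R + R ^ 2) / N ≤ δ := by
      rw [div_le_iff₀ hNp, mul_comm δ, ← div_le_iff₀ hδ0]; linarith
    have ht : (x / N + θ) ^ 2 ≤ 2 - 3 * δ := by
      have b1 : (x / N + θ) ^ 2 = θ ^ 2 + (2 * θ * x + x ^ 2 / N) / N := by
        field_simp
        ring
      have b2 : 2 * θ * x ≤ 4 * R := by
        calc 2 * θ * x ≤ |2 * θ * x| := le_abs_self _
          _ = 2 * (|θ| * |x|) := by rw [abs_mul, abs_mul, abs_two]; ring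
          _ ≤ 2 * (2 * R) := by gcongr
          _ = 4 * R := by ring
      have b3 : x ^ 2 / N ≤ R ^ 2 := by
        have : x ^ 2 ≤ R ^ 2 := sq_le_sq.2 (by rw [abs_of_pos hR]; exact hx.le)
        exact (div_le_self (sq_nonneg x) hN1).trans this
      have b4 : (2 * θ * x + x ^ 2 / N) / N ≤ (4 * R + R ^ 2) / N := by
        gcongr
      rw [b1]
      linarith
    have := kerK_ge N δ (Real.sqrt N * (x / N + θ)) hδ0 (by linarith) hδ1 (by
      rw [hsq]; nlinarith)
    rw [inv_mul_eq_div, le_div_iff₀ hsN]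
    exact this
  · refine (min_le_right _ _).trans ?_
    have hNN : (N : ℝ) ≤ N0 := by exact_mod_cast h
    have h1 := kerK_ge_zero N hN (Real.sqrt N * (x / N + θ))
    have h2 : (Real.sqrt N * (x / N + θ)) ^ 2 ≤ N0 * (2 + R) ^ 2 := by
      rw [hsq]
      have : |x / N + θ| ≤ |2 + R| := by
        rw [abs_of_pos (by linarith : 0 < 2 + R)]
        have b : |x / N| ≤ R := by
          rw [abs_div, abs_of_pos hNp]
          exact (div_le_self (abs_nonneg x) hN1).trans hx.le
        linarith [abs_add_le (x / N) θ]
      have := sq_le_sq.2 this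
      gcongr
    have h3 : Real.exp (-(N0 * (2 + R) ^ 2)) ≤ Real.exp (-(Real.sqrt N * (x / N + θ)) ^ 2) := by
      apply Real.exp_le_exp.2
      linarith
    have h4 : (Real.sqrt N0)⁻¹ ≤ (Real.sqrt N)⁻¹ := by gcongr
    have h5 := (mul_le_mul_of_nonneg_left h3 (by positivity : 0 ≤ (Real.sqrt Real.pi)⁻¹)).trans h1
    exact mul_le_mul h4 h5 (by positivity) (by positivity)

/-- Uniform positivity of the diagonal kernel in the bulk:
`sup_{N≥1} sup_{|x|<R} 1/L^N(x_θ^N, x_θ^N) < ∞`, and in particular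
`L^N(x_θ^N, x_θ^N) > 0` there. -/
theorem diag_kernel_uniformly_positive (θ R : ℝ)
    (hθ1 : -Real.sqrt 2 < θ) (hθ2 : θ < Real.sqrt 2) (hR : 0 < R) :
    ∃ c : ℝ, ∀ N : ℕ, 1 ≤ N → ∀ x : ℝ, |x| < R →
      0 < kerL N (x / (N : ℝ) + θ) (x / (N : ℝ) + θ) ∧
      1 / kerL N (x / (N : ℝ) + θ) (x / (N : ℝ) + θ) ≤ c := by
  have hθ : θ ^ 2 < 2 := by
    have h2 : Real.sqrt 2 ^ 2 = 2 := Real.sq_sqrt (by norm_num)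
    nlinarith
  obtain ⟨c, hc, h⟩ := kerL_lower θ R hθ hR
  refine ⟨1 / c, fun N hN x hx => ?_⟩
  have := h N hN x hx
  exact ⟨hc.trans_le this, one_div_le_one_div_of_le hc this⟩
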